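/- arXiv:1203.1027 — 3 statements merged into one kernel-verified Lean document; each statement's English description precedes it below -/
import Mathlib

section
/- Let n ≥ 1 and let R be the group ring ℤ[ℤ^n] (equivalently, the Laurent polynomial ring in n variables over ℤ); for γ ∈ ℤ^n write e^γ for the corresponding basis element of R. Let α, β ∈ ℤ^n be linearly independent over ℚ and let P ∈ R. If (1 − e^α) divides (1 − e^β)·P in R, then (1 − e^α) divides P in R. -/
open AddMonoidAlgebra in
theorem aux_zsmul {G : Type*} [AddCommGroup G] (a : G) (k : ℤ) :
    (1 - single a (1 : ℤ)) ∣ (1 - single (k • a) (1 : ℤ) : AddMonoidAlgebra ℤ G) := by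
  have step : ∀ j : ℤ, (single ((j + 1) • a) (1 : ℤ) : AddMonoidAlgebra ℤ G)
      = single (j • a) 1 * single a 1 := by
    intro j
    rw [single_mul_single, add_smul, one_smul, one_mul]
  induction k using Int.induction_on with
  | zero => simp [← one_def]
  | succ i ih =>
    rw [step]
    have : (1 - single ((i : ℤ) • a) (1 : ℤ) * single a 1 : AddMonoidAlgebra ℤ G)
      = (1 - single ((i : ℤ) • a) 1) + (1 - single a 1) * single ((i : ℤ) • a) 1 := by ring
    rw [this]
    exact dvd_add ih (dvd_mul_right _ _)
  | pred i ih =>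
    have h := step (-(i : ℤ) - 1)
    rw [sub_add_cancel] at h
    have : (1 - single ((-(i : ℤ) - 1) • a) (1 : ℤ) : AddMonoidAlgebra ℤ G)
      = (1 - single ((-(i : ℤ)) • a) 1)
        - (1 - single a 1) * single ((-(i : ℤ) - 1) • a) 1 := by rw [h]; ring
    rw [this]
    exact dvd_sub ih (dvd_mul_right _ _)

open AddMonoidAlgebra in
theorem aux_section {G : Type*} [AddCommGroup G] (a : G)
    (P : AddMonoidAlgebra ℤ G) :
    (1 - single a (1 : ℤ)) ∣ P - mapDomain (Quotient.out : G ⧸ AddSubgroup.zmultiples a → G)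
      (mapDomain (QuotientAddGroup.mk : G → G ⧸ AddSubgroup.zmultiples a) P) := by
  induction P using AddMonoidAlgebra.induction_linear with
  | zero => simp
  | add x y hx hy =>
    rw [mapDomain_add, mapDomain_add, add_sub_add_comm]
    exact dvd_add hx hy
  | single m r =>
    rw [mapDomain_single, mapDomain_single]
    have h : (QuotientAddGroup.mk m : G ⧸ AddSubgroup.zmultiples a) =
        QuotientAddGroup.mk (Quotient.out (QuotientAddGroup.mk m : G ⧸ AddSubgroup.zmultiples a)) :=
      (QuotientAddGroup.out_eq' _).symm
    obtain ⟨k, hk⟩ := AddSubgroup.mem_zmultiples_iff.1 (QuotientAddGroup.eq.1 h)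
    generalize Quotient.out (QuotientAddGroup.mk m : G ⧸ AddSubgroup.zmultiples a) = m' at *
    have : m' = m + k • a := by rw [hk]; abel
    have h2 : (single m r - single m' r : AddMonoidAlgebra ℤ G)
        = single m r * (1 - single (k • a) 1) := by
      rw [mul_sub, mul_one, single_mul_single, mul_one, this]
    rw [h2]
    exact dvd_mul_of_dvd_right (aux_zsmul a k) _

open AddMonoidAlgebra in
theorem aux_nzd {H : Type*} [AddCommGroup H] (b : H) (hb : ∀ k : ℤ, k • b = 0 → k = 0)
    (Q : AddMonoidAlgebra ℤ H) (hQ : (1 - single b (1 : ℤ)) * Q = 0) : Q = 0 := by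
  have h1 : Q = single b 1 * Q := by
    rw [sub_mul, one_mul, sub_eq_zero] at hQ; exact hQ
  have h2 : ∀ h, Q.coeff h = Q.coeff (-b + h) := by
    intro h
    conv_lhs => rw [h1]
    rw [coeff_single_mul_apply, one_mul]
  have h3 : ∀ (k : ℕ) h, Q.coeff h = Q.coeff (-(k • b) + h) := by
    intro k
    induction k with
    | zero => simp
    | succ k ih =>
      intro h
      rw [ih, h2]
      congr 1
      rw [succ_nsmul]; abel
  by_contra hne
  have : ∃ h, Q.coeff h ≠ 0 := by
    by_contra! hc
    exact hne (by ext h; simpa using hc h)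
  obtain ⟨h, hh⟩ := this
  have hinj : Function.Injective (fun k : ℕ => -(k • b) + h) := by
    intro k l hkl
    have e : k • b = l • b := by simpa using hkl
    have := hb ((k : ℤ) - l) (by rw [sub_smul, natCast_zsmul, natCast_zsmul, e, sub_self])
    omega
  refine Set.infinite_range_of_injective hinj (Q.coeff.support.finite_toSet.subset ?_)
  rintro _ ⟨k, rfl⟩
  simpa [← h3 k h] using hh

/-- In the group ring `ℤ[ℤⁿ]` (Laurent polynomials), if `α, β ∈ ℤⁿ` are
linearly independent over `ℚ` and `(1 - e^α) ∣ (1 - e^β) * P`, then `(1 - e^α) ∣ P`. -/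
theorem stmt0 (n : ℕ) (hn : 1 ≤ n) (α β : Fin n → ℤ)
    (hind : LinearIndependent ℚ
      ![(fun i => (α i : ℚ)), (fun i => (β i : ℚ))])
    (P : AddMonoidAlgebra ℤ (Fin n → ℤ))
    (hdvd : (1 - AddMonoidAlgebra.single α (1 : ℤ)) ∣
      (1 - AddMonoidAlgebra.single β (1 : ℤ)) * P) :
    (1 - AddMonoidAlgebra.single α (1 : ℤ)) ∣ P := by
  obtain ⟨c, hc⟩ := hdvd
  have hz := congrArg (AddMonoidAlgebra.mapDomainRingHom ℤ
    (QuotientAddGroup.mk' (AddSubgroup.zmultiples α))) hc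
  have h0 : (QuotientAddGroup.mk α : (Fin n → ℤ) ⧸ AddSubgroup.zmultiples α) = 0 :=
    (QuotientAddGroup.eq_zero_iff _).2 (AddSubgroup.mem_zmultiples α)
  simp only [map_mul, map_sub, map_one, AddMonoidAlgebra.mapDomainRingHom_apply,
    AddMonoidAlgebra.mapDomain_single, QuotientAddGroup.mk'_apply, h0,
    ← AddMonoidAlgebra.one_def, sub_self, zero_mul] at hz
  have hQ := aux_nzd _ ?_ _ hz
  · have := aux_section α P
    have hQ' : AddMonoidAlgebra.mapDomain
      (QuotientAddGroup.mk : (Fin n → ℤ) → (Fin n → ℤ) ⧸ AddSubgroup.zmultiples α) P = 0 := hQ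
    rwa [hQ', AddMonoidAlgebra.mapDomain_zero, sub_zero] at this
  · intro k hk
    rw [← QuotientAddGroup.mk_zsmul, QuotientAddGroup.eq_zero_iff,
      AddSubgroup.mem_zmultiples_iff] at hk
    obtain ⟨l, hl⟩ := hk
    have := LinearIndependent.pair_iff.1 hind (l : ℚ) (-(k : ℚ)) (by
      ext i
      have := congrFun hl i
      simp only [Pi.smul_apply, smul_eq_mul] at this
      simp only [Pi.add_apply, Pi.smul_apply, smul_eq_mul, Pi.zero_apply]
      have h' : (l : ℚ) * α i = k * β i := by exact_mod_cast this
      rw [h']; ring)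
    simpa using this.2
end

section
/- Let n ≥ 2 and let ν ∈ K_α(Γ) be the class ν(j) = z_j. Then the classes 1, ν, ν^2, …, ν^{n−1} form a basis of K_α(Γ) as a module over R. -/
/-- The Laurent polynomial ring `R = ℤ[z₁^{±1},…,z_n^{±1}]`, realized as the group
algebra of `ℤⁿ` over `ℤ`. -/
abbrev Laur (n : ℕ) : Type := AddMonoidAlgebra ℤ (Fin n → ℤ)

/-- The variable `z_j ∈ R`. -/
noncomputable def Z (n : ℕ) (j : Fin n) : Laur n :=
  AddMonoidAlgebra.single (Pi.single j 1) 1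

/-- Membership in `K_α(K_n)`: `(z_j − z_k) ∣ g(j) − g(k)` for all `j ≠ k`. -/
def IsKClass (n : ℕ) (g : Fin n → Laur n) : Prop :=
  ∀ j k : Fin n, j ≠ k → (Z n j - Z n k) ∣ g j - g k

theorem Z_inj (n : ℕ) : Function.Injective (Z n) := by
  intro i j h
  unfold Z at h
  have h2 := Finsupp.single_left_injective (one_ne_zero (α := ℤ))
    (congrArg AddMonoidAlgebra.coeff h)
  by_contra hij
  have := congrFun h2 i
  simp [hij] at this

theorem Z_pow (n : ℕ) (j : Fin n) (t : ℕ) :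
    Z n j ^ t = AddMonoidAlgebra.single (t • Pi.single j (1 : ℤ)) (1 : ℤ) := by
  unfold Z
  rw [AddMonoidAlgebra.single_pow, one_pow]

/-- Exponent map of the substitution `z_j ↦ z_m`. -/
def expMap (n : ℕ) (m j : Fin n) : (Fin n → ℤ) →+ (Fin n → ℤ) where
  toFun e := e - e j • Pi.single j 1 + e j • Pi.single m 1
  map_zero' := by simp
  map_add' a b := by
    simp only [Pi.add_apply, add_smul]
    abel

/-- The substitution `z_j ↦ z_m`. -/
noncomputable def substHom (n : ℕ) (m j : Fin n) : Laur n →+* Laur n :=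
  AddMonoidAlgebra.mapDomainRingHom ℤ (expMap n m j)

theorem substHom_single (n : ℕ) (m j : Fin n) (e : Fin n → ℤ) (c : ℤ) :
    substHom n m j (AddMonoidAlgebra.single e c) =
      AddMonoidAlgebra.single (expMap n m j e) c := by
  simp [substHom]

theorem substHom_Z_self (n : ℕ) (m j : Fin n) : substHom n m j (Z n j) = Z n m := by
  unfold Z
  rw [substHom_single]
  simp [expMap]

theorem substHom_Z_ne (n : ℕ) (m j k : Fin n) (h : k ≠ j) :
    substHom n m j (Z n k) = Z n k := by
  unfold Z
  rw [substHom_single]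
  simp [expMap, h.symm]

theorem dvd_sub_single (n : ℕ) (m j : Fin n) (e : Fin n → ℤ) (c : ℤ) :
    (Z n m - Z n j) ∣
      AddMonoidAlgebra.single e c - AddMonoidAlgebra.single (expMap n m j e) c := by
  obtain ⟨t, ht | ht⟩ := Int.eq_nat_or_neg (e j)
  · have : (AddMonoidAlgebra.single e c - AddMonoidAlgebra.single (expMap n m j e) c : Laur n)
      = AddMonoidAlgebra.single (e - e j • Pi.single j 1) c * (Z n j ^ t - Z n m ^ t) := by
      rw [mul_sub, Z_pow, Z_pow, AddMonoidAlgebra.single_mul_single,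
        AddMonoidAlgebra.single_mul_single, mul_one]
      simp [expMap, ht]
    rw [this]
    refine Dvd.dvd.mul_left ?_ _
    rw [← neg_dvd, neg_sub]
    exact sub_dvd_pow_sub_pow _ _ _
  · have : (AddMonoidAlgebra.single e c - AddMonoidAlgebra.single (expMap n m j e) c : Laur n)
      = AddMonoidAlgebra.single (e + e j • Pi.single m 1) c * (Z n m ^ t - Z n j ^ t) := by
      rw [mul_sub, Z_pow, Z_pow, AddMonoidAlgebra.single_mul_single,
        AddMonoidAlgebra.single_mul_single, mul_one]
      congr 2
      · rw [ht]; simp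
      · simp only [expMap, ht, AddMonoidHom.coe_mk, ZeroHom.coe_mk]
        rw [neg_smul, neg_smul, natCast_zsmul, natCast_zsmul]
        abel
    rw [this]
    exact Dvd.dvd.mul_left (sub_dvd_pow_sub_pow _ _ _) _

theorem dvd_sub_subst (n : ℕ) (m j : Fin n) (x : Laur n) :
    (Z n m - Z n j) ∣ x - substHom n m j x := by
  induction x using AddMonoidAlgebra.induction_linear with
  | zero => simp
  | add a b ha hb =>
    rw [map_add, add_sub_add_comm]
    exact dvd_add ha hb
  | single e c =>
    rw [substHom_single]
    exact dvd_sub_single n m j e c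

theorem dvd_iff_subst (n : ℕ) (m j : Fin n) (hmj : m ≠ j) (x : Laur n) :
    (Z n m - Z n j) ∣ x ↔ substHom n m j x = 0 := by
  constructor
  · rintro ⟨y, rfl⟩
    rw [map_mul, map_sub, substHom_Z_self, substHom_Z_ne n m j m hmj, sub_self, zero_mul]
  · intro h
    have := dvd_sub_subst n m j x
    rwa [h, sub_zero] at this

theorem prod_dvd (n : ℕ) (m : Fin n) (S : Finset (Fin n)) (hm : m ∉ S) (x : Laur n)
    (hx : ∀ j ∈ S, (Z n m - Z n j) ∣ x) : ∏ j ∈ S, (Z n m - Z n j) ∣ x := by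
  induction S using Finset.induction_on with
  | empty => simp
  | insert j S hj ih =>
    rw [Finset.mem_insert, not_or] at hm
    obtain ⟨y, hy⟩ := ih hm.2 (fun k hk => hx k (Finset.mem_insert_of_mem hk))
    have h1 := (dvd_iff_subst n m j hm.1 x).1 (hx j (Finset.mem_insert_self _ _))
    rw [hy, map_mul, map_prod] at h1
    have h2 : ∏ k ∈ S, substHom n m j (Z n m - Z n k) ≠ 0 := by
      rw [Finset.prod_ne_zero_iff]
      intro k hk
      rw [map_sub, substHom_Z_ne n m j m hm.1,
        substHom_Z_ne n m j k (fun h => hj (h ▸ hk)), sub_ne_zero]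
      exact fun h => hm.2 (Z_inj n h ▸ hk)
    have h3 := (mul_eq_zero.1 h1).resolve_left h2
    rw [Finset.prod_insert hj, hy, mul_comm]
    exact mul_dvd_mul_left _ ((dvd_iff_subst n m j hm.1 y).2 h3)

open Polynomial in
theorem exists_interp (n : ℕ) (g : Fin n → Laur n) (hg : IsKClass n g) (S : Finset (Fin n)) :
    ∃ p : (Laur n)[X], p.degree < S.card ∧ ∀ j ∈ S, p.eval (Z n j) = g j := by
  induction S using Finset.induction_on with
  | empty => exact ⟨0, by simp, by simp⟩
  | insert m S hm ih =>
    obtain ⟨p, hp, hpe⟩ := ih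
    have hd : ∏ j ∈ S, (Z n m - Z n j) ∣ g m - p.eval (Z n m) := by
      refine prod_dvd n m S hm _ fun j hj => ?_
      have h1 := hg m j (fun h => hm (h ▸ hj))
      have h2 := Polynomial.sub_dvd_eval_sub (Z n m) (Z n j) p
      have h3 := dvd_sub h1 h2
      rw [hpe j hj] at h3
      have h4 : g m - g j - (p.eval (Z n m) - g j) = g m - p.eval (Z n m) := by ring
      rwa [h4] at h3
    obtain ⟨q, hq⟩ := hd
    refine ⟨p + C q * ∏ j ∈ S, (X - C (Z n j)), ?_, ?_⟩
    · rw [Finset.card_insert_of_notMem hm]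
      refine lt_of_le_of_lt (degree_add_le _ _) (max_lt ?_ ?_)
      · exact hp.trans (by exact_mod_cast Nat.lt_succ_self _)
      · refine lt_of_le_of_lt (b := (S.card : WithBot ℕ)) ?_
          (by exact_mod_cast Nat.lt_succ_self _)
        have h5 : (∏ j ∈ S, (X - C (Z n j))).degree = (S.card : WithBot ℕ) := by
          rw [degree_prod]
          simp
        rw [degree_mul, h5]
        calc (C q).degree + (S.card : WithBot ℕ) ≤ 0 + (S.card : WithBot ℕ) := by
              gcongr
              exact degree_C_le
          _ = _ := zero_add _
    · intro j hj
      rw [eval_add, eval_mul, eval_C, eval_prod]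
      simp only [eval_sub, eval_X, eval_C]
      rcases Finset.mem_insert.1 hj with rfl | hj
      · rw [mul_comm, ← hq]; ring
      · rw [Finset.prod_eq_zero hj (sub_self _), hpe j hj]; simp

/-- the classes `1, ν, ν², …, ν^{n−1}`, where `ν(j) = z_j`, form a basis of
`K_α(K_n)` as a module over `R`: each power is a `K`-class and every `K`-class has a
unique representation as an `R`-linear combination of them. -/
theorem stmt7 (n : ℕ) (hn : 2 ≤ n) :
    (∀ k : Fin n, IsKClass n (fun j => Z n j ^ (k : ℕ))) ∧
    (∀ g, IsKClass n g →
      ∃! a : Fin n → Laur n, g = fun j => ∑ k : Fin n, a k * Z n j ^ (k : ℕ)) := by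
  constructor
  · intro k i j _
    exact sub_dvd_pow_sub_pow _ _ _
  · intro g hg
    obtain ⟨p, hp, hpe⟩ := exists_interp n g hg Finset.univ
    rw [Finset.card_univ, Fintype.card_fin] at hp
    have hex : g = fun j => ∑ k : Fin n, p.coeff k * Z n j ^ (k : ℕ) := by
      funext j
      rw [← hpe j (Finset.mem_univ j), Fin.sum_univ_eq_sum_range
        (fun k => p.coeff k * Z n j ^ k) n]
      refine Polynomial.eval_eq_sum_range' ?_ _
      rcases eq_or_ne p 0 with rfl | h0
      · simp; omega
      · exact (Polynomial.natDegree_lt_iff_degree_lt h0).2 hp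
    refine ⟨fun k => p.coeff k, hex, ?_⟩
    intro b hb
    rw [← sub_eq_zero]
    refine Matrix.eq_zero_of_forall_index_sum_mul_pow_eq_zero (Z_inj n) fun j => ?_
    have := congrFun (hb.symm.trans hex) j
    simp only [Pi.sub_apply, sub_mul, Finset.sum_sub_distrib]
    exact sub_eq_zero.2 this
end

section
/- Let n ≥ 2 and let ψ : S → R be the injective ring homomorphism determined by ψ(y_j) = z_j for all j, whose image is the polynomial subring R_+ = ℤ[z_1,…,z_n] of R. Then the map Φ : H_α(Γ) → Maps({1,…,n}, R) given by Φ(f)(j) = ψ(f(j)) is an injective ring homomorphism whose image is contained in K_α(Γ), it satisfies Φ(q·f) = ψ(q)·Φ(f) for all q ∈ S and f ∈ H_α(Γ), and its image equals { g ∈ K_α(Γ) : g(j) ∈ R_+ for all j }. -/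
open MvPolynomial

/-- Membership in `H_α(K_n)`: `(y_j − y_k) ∣ f(j) − f(k)` for all `j ≠ k`. -/
def IsHClass (n : ℕ) (f : Fin n → MvPolynomial (Fin n) ℤ) : Prop :=
  ∀ j k : Fin n, j ≠ k → (X j - X k : MvPolynomial (Fin n) ℤ) ∣ f j - f k

/-- The ring homomorphism `ψ : S → R` determined by `ψ(y_j) = z_j`. -/
noncomputable def psi (n : ℕ) : MvPolynomial (Fin n) ℤ →+* Laur n :=
  (MvPolynomial.aeval (fun j => Z n j) : MvPolynomial (Fin n) ℤ →ₐ[ℤ] Laur n).toRingHom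

/-- The polynomial subring `R₊ = ℤ[z₁,…,z_n]` of `R`. -/
noncomputable def Rplus (n : ℕ) : Subring (Laur n) :=
  Subring.closure (Set.range (Z n))

/-- The map `Φ : Maps({1,…,n}, S) → Maps({1,…,n}, R)`, `Φ(f)(j) = ψ(f(j))`. -/
noncomputable def Phi (n : ℕ) (f : Fin n → MvPolynomial (Fin n) ℤ) : Fin n → Laur n :=
  fun j => psi n (f j)

noncomputable def expHom (n : ℕ) : (Fin n →₀ ℕ) →+ (Fin n → ℤ) where
  toFun m := fun i => (m i : ℤ)
  map_zero' := by ext; simp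
  map_add' a b := by ext; simp

theorem psi_eq (n : ℕ) (p : MvPolynomial (Fin n) ℤ) :
    psi n p = AddMonoidAlgebra.mapDomainRingHom ℤ (expHom n) p := by
  have : psi n = (AddMonoidAlgebra.mapDomainRingHom ℤ (expHom n) :
      AddMonoidAlgebra ℤ (Fin n →₀ ℕ) →+* Laur n) := by
    apply MvPolynomial.ringHom_ext
    · intro r
      have h : (C : ℤ →+* MvPolynomial (Fin n) ℤ) r = ((r : ℤ) : MvPolynomial (Fin n) ℤ) := by simp
      rw [h, map_intCast]
      exact (map_intCast (AddMonoidAlgebra.mapDomainRingHom ℤ (expHom n)) r).symm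
    · intro i
      have h1 : psi n (X i) = Z n i := by simp [psi]
      rw [h1]
      change _ = AddMonoidAlgebra.mapDomainRingHom ℤ (expHom n)
        (AddMonoidAlgebra.single (Finsupp.single i 1) 1)
      simp only [AddMonoidAlgebra.mapDomainRingHom_apply, AddMonoidAlgebra.mapDomain_single, Z]
      congr 1
      ext j
      simp [expHom, Finsupp.single_apply, Pi.single_apply, eq_comm]
  rw [this]

theorem psi_inj (n : ℕ) : Function.Injective (psi n) := by
  intro p q h
  rw [psi_eq, psi_eq] at h
  refine AddMonoidAlgebra.mapDomain_injective (f := expHom n) ?_ h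
  intro a b hab
  ext i
  have := congrFun hab i
  simpa [expHom] using this

theorem psi_X (n : ℕ) (i : Fin n) : psi n (X i) = Z n i := by simp [psi]

theorem psi_range (n : ℕ) : (psi n).range = Rplus n := by
  apply le_antisymm
  · rintro _ ⟨p, rfl⟩
    induction p using MvPolynomial.induction_on with
    | C a =>
      have h : (C : ℤ →+* MvPolynomial (Fin n) ℤ) a = ((a : ℤ) : MvPolynomial (Fin n) ℤ) := by simp
      rw [h, map_intCast]
      exact intCast_mem _ _
    | add p q hp hq => rw [map_add]; exact add_mem hp hq
    | mul_X p i hp =>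
      rw [map_mul, psi_X]
      exact mul_mem hp (Subring.subset_closure ⟨i, rfl⟩)
  · refine (Subring.closure_le).2 ?_
    rintro _ ⟨i, rfl⟩
    exact ⟨X i, psi_X n i⟩

/-- The substitution `X j ↦ X k`. -/
noncomputable def phiS (n : ℕ) (j k : Fin n) : MvPolynomial (Fin n) ℤ →+* MvPolynomial (Fin n) ℤ :=
  (MvPolynomial.aeval (fun i => if i = j then X k else X i) :
    MvPolynomial (Fin n) ℤ →ₐ[ℤ] MvPolynomial (Fin n) ℤ).toRingHom

theorem phiS_X (n : ℕ) (j k i : Fin n) : phiS n j k (X i) = if i = j then X k else X i := by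
  simp [phiS]

theorem dvd_sub_phiS (n : ℕ) (j k : Fin n) (p : MvPolynomial (Fin n) ℤ) :
    (X j - X k) ∣ p - phiS n j k p := by
  induction p using MvPolynomial.induction_on with
  | C a => simp [phiS]
  | add p q hp hq =>
    rw [map_add, add_sub_add_comm]; exact dvd_add hp hq
  | mul_X p i hp =>
    rw [map_mul, phiS_X]
    split_ifs with h
    · subst h
      have : p * X i - phiS n i k p * X k = (p - phiS n i k p) * X i
        + phiS n i k p * (X i - X k) := by ring
      rw [this]
      exact dvd_add (hp.mul_right _) (dvd_mul_left _ _)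
    · rw [← sub_mul]; exact hp.mul_right _

/-- The map of exponent lattices sending `e_j` to `e_k`. -/
noncomputable def latHom (n : ℕ) (j k : Fin n) : (Fin n → ℤ) →+ (Fin n → ℤ) where
  toFun m := m + m j • (Pi.single k 1 - Pi.single j 1)
  map_zero' := by simp
  map_add' a b := by simp only [Pi.add_apply, add_smul]; abel

noncomputable def theta (n : ℕ) (j k : Fin n) : Laur n →+* Laur n :=
  AddMonoidAlgebra.mapDomainRingHom ℤ (latHom n j k)

theorem theta_Z (n : ℕ) (j k i : Fin n) :
    theta n j k (Z n i) = if i = j then Z n k else Z n i := by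
  simp only [theta, Z, AddMonoidAlgebra.mapDomainRingHom_apply, AddMonoidAlgebra.mapDomain_single]
  split_ifs with h
  · subst h; congr 1; simp [latHom]
  · congr 1; simp [latHom, Pi.single_apply, Ne.symm h, eq_comm]

theorem theta_psi (n : ℕ) (j k : Fin n) (p : MvPolynomial (Fin n) ℤ) :
    theta n j k (psi n p) = psi n (phiS n j k p) := by
  have : (theta n j k).comp (psi n) = (psi n).comp (phiS n j k) := by
    apply MvPolynomial.ringHom_ext
    · intro r
      have h : (C : ℤ →+* MvPolynomial (Fin n) ℤ) r = ((r : ℤ) : MvPolynomial (Fin n) ℤ) := by simp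
      rw [h, map_intCast, map_intCast]
    · intro i
      simp only [RingHom.comp_apply, psi_X, theta_Z, phiS_X]
      split_ifs <;> simp [psi_X]
  exact RingHom.congr_fun this p

theorem dvd_of_psi (n : ℕ) (j k : Fin n) (hjk : j ≠ k) (p : MvPolynomial (Fin n) ℤ)
    (h : Z n j - Z n k ∣ psi n p) : (X j - X k) ∣ p := by
  have h0 : phiS n j k p = 0 := by
    apply psi_inj n
    rw [← theta_psi, map_zero]
    obtain ⟨c, hc⟩ := h
    rw [hc, map_mul, map_sub, theta_Z, theta_Z, if_pos rfl, if_neg hjk.symm, sub_self, zero_mul]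
  have := dvd_sub_phiS n j k p
  rwa [h0, sub_zero] at this

/-- `ψ` is injective with image `R₊`; `Φ : H_α(Γ) → Maps({1,…,n}, R)` is an
injective ring homomorphism with image contained in `K_α(Γ)`, satisfying
`Φ(q·f) = ψ(q)·Φ(f)`, and its image is exactly `{g ∈ K_α(Γ) : g(j) ∈ R₊ for all j}`. -/
theorem stmt8 (n : ℕ) (hn : 2 ≤ n) :
    Function.Injective (psi n) ∧
    (psi n).range = Rplus n ∧
    (∀ f g, Phi n (f + g) = Phi n f + Phi n g) ∧
    (∀ f g, Phi n (f * g) = Phi n f * Phi n g) ∧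
    Phi n 1 = 1 ∧
    (∀ f g, IsHClass n f → IsHClass n g → Phi n f = Phi n g → f = g) ∧
    (∀ f, IsHClass n f → IsKClass n (Phi n f)) ∧
    (∀ (q : MvPolynomial (Fin n) ℤ) (f : Fin n → MvPolynomial (Fin n) ℤ),
      Phi n (q • f) = psi n q • Phi n f) ∧
    (∀ g : Fin n → Laur n,
      (IsKClass n g ∧ ∀ j, g j ∈ Rplus n) ↔ ∃ f, IsHClass n f ∧ Phi n f = g) := by
  have hK : ∀ f, IsHClass n f → IsKClass n (Phi n f) := by
    intro f hf j k hjk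
    have := map_dvd (psi n) (hf j k hjk)
    simpa only [map_sub, psi_X, Phi] using this
  refine ⟨psi_inj n, psi_range n, ?_, ?_, ?_, ?_, hK, ?_, ?_⟩
  · intro f g; funext j; simp [Phi]
  · intro f g; funext j; simp [Phi]
  · funext j; simp [Phi]
  · intro f g _ _ h
    funext j
    exact psi_inj n (congrFun h j)
  · intro q f; funext j; simp [Phi]
  · intro g
    constructor
    · rintro ⟨hg, hp⟩
      have : ∀ j, ∃ p, psi n p = g j := by
        intro j
        have := hp j
        rw [← psi_range] at this
        exact this
      choose f hf using this
      refine ⟨f, ?_, funext hf⟩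
      intro j k hjk
      apply dvd_of_psi n j k hjk
      rw [map_sub, hf, hf]
      exact hg j k hjk
    · rintro ⟨f, hf, rfl⟩
      refine ⟨hK f hf, fun j => ?_⟩
      rw [← psi_range]
      exact ⟨f j, rfl⟩
end
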